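/- Let g ≥ 1 and n ≥ 3, and let x = (x₁,…,xₙ) ∈ A_g^n. Then: (i) 1/g > x₁ ≥ xₙ > 0; (ii) for each k = 1,…,n−1 one cannot simultaneously have x_k = x_{k+1} and x₁⋯x_k = g(x_{k+1} + ⋯ + xₙ); (iii) if for some 1 ≤ k ≤ n−1 the equality x₁⋯x_i = g(x_{i+1} + ⋯ + xₙ) holds for all i ≤ k, then x_i = 1/s_{g,i} for all i = 1,…,k. -/

import Mathlib

open Finset

/-- The `g`-Sylvester sequence: `s_{g,1} = g+1`, `s_{g,k+1} = s_{g,k}(s_{g,k}-1)+1`.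
(The value at `0` is junk and never used.) -/
def sylv (g : ℕ) : ℕ → ℕ
  | 0 => 0
  | 1 => g + 1
  | k + 2 => sylv g (k + 1) * (sylv g (k + 1) - 1) + 1

/-- The truncated `g`-Sylvester sequence `t_{g,k} = s_{g,k} - 1`. -/
def tsylv (g k : ℕ) : ℕ := sylv g k - 1

/-- The product `x₁⋯x_k` of the first `k` coordinates. -/
def prodHead {n : ℕ} (x : Fin n → ℝ) (k : ℕ) : ℝ :=
  ∏ i ∈ Finset.univ.filter (fun i : Fin n => i.val < k), x i

/-- The sum `x_{k+1} + ⋯ + xₙ` of the last `n - k` coordinates. -/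
def sumTail {n : ℕ} (x : Fin n → ℝ) (k : ℕ) : ℝ :=
  ∑ i ∈ Finset.univ.filter (fun i : Fin n => k ≤ i.val), x i

/-- The compact set `A_g^n` of points `x ∈ ℝⁿ` with `x₁ ≥ ⋯ ≥ xₙ ≥ 0`,
`x₁ + ⋯ + xₙ = 1/g` and `x₁⋯x_k ≤ g(x_{k+1} + ⋯ + xₙ)` for `k = 1,…,n-1`. -/
def Agn (g n : ℕ) : Set (Fin n → ℝ) :=
  {x | Antitone x ∧ (∀ i, 0 ≤ x i) ∧ (∑ i, x i) = 1 / (g : ℝ) ∧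
    ∀ k, 1 ≤ k → k ≤ n - 1 → prodHead x k ≤ (g : ℝ) * sumTail x k}

/-!
Write `P k = x₁⋯x_k` and `T k = x_{k+1} + ⋯ + xₙ`. The inequality `P k ≤ g * T k` also holds at
`k = 0`, where both sides equal `1`. If `P k > 0`, then `T k > 0`, so by monotonicity
`x_{k+1} > 0` and `P (k + 1) > 0`; hence all coordinates are positive. For (ii),
`P k ≤ x_k = x_{k+1} ≤ T k ≤ g * T k`, where the first inequality is strict for `k ≥ 2` and the
second one for `k = 1` because `n ≥ 3`. For (iii), subtracting the equalities at `k` and `k + 1`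
gives `P k * (1 - x_{k+1}) = g * x_{k+1}`, and induction on `k` yields both
`P k = g / t_{g,k+1}` and `x_{k+1} = 1 / s_{g,k+1}`.
-/

section Sylvester

variable (g k : ℕ)

theorem tsylv_one : tsylv g 1 = g := rfl

theorem tsylv_succ_succ : tsylv g (k + 2) = sylv g (k + 1) * tsylv g (k + 1) := rfl

theorem sylv_succ_eq_tsylv_add_one : sylv g (k + 1) = tsylv g (k + 1) + 1 := by
  cases k <;> rfl

end Sylvester

section HeadTail

variable {n k : ℕ} {x : Fin n → ℝ} {c : ℝ}

theorem prodHead_zero (x : Fin n → ℝ) : prodHead x 0 = 1 := by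
  simp [prodHead]

theorem prodHead_succ (x : Fin n → ℝ) (hk : k < n) :
    prodHead x (k + 1) = prodHead x k * x ⟨k, hk⟩ := by
  have hinsert : univ.filter (fun i : Fin n ↦ i.val < k + 1)
      = insert ⟨k, hk⟩ (univ.filter fun i : Fin n ↦ i.val < k) := by
    ext i
    simp only [mem_filter_univ, mem_insert, Fin.ext_iff]
    omega
  rw [prodHead, hinsert, prod_insert (by simp), mul_comm, prodHead]

theorem prodHead_lt_one (hpos : ∀ i, 0 < x i) (hlt : ∀ i, x i < 1) (hk : 0 < k) (hn : 0 < n) :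
    prodHead x k < 1 := by
  simpa [prodHead] using prod_lt_prod_of_nonempty (g := fun _ ↦ (1 : ℝ))
    (fun i _ ↦ hpos i) (fun i _ ↦ hlt i) ⟨⟨0, hn⟩, by simpa using hk⟩

theorem sumTail_zero (x : Fin n → ℝ) : sumTail x 0 = ∑ i, x i := by
  simp [sumTail]

theorem sumTail_eq_add_sumTail_succ (x : Fin n → ℝ) (hk : k < n) :
    sumTail x k = x ⟨k, hk⟩ + sumTail x (k + 1) := by
  have hinsert : univ.filter (fun i : Fin n ↦ k ≤ i.val)
      = insert ⟨k, hk⟩ (univ.filter fun i : Fin n ↦ k + 1 ≤ i.val) := by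
    ext i
    simp only [mem_filter_univ, mem_insert, Fin.ext_iff]
    omega
  rw [sumTail, hinsert, sum_insert (by simp), sumTail]

theorem sumTail_nonneg (hx : ∀ i, 0 ≤ x i) (k : ℕ) : 0 ≤ sumTail x k :=
  sum_nonneg fun i _ ↦ hx i

theorem sumTail_pos (hx : ∀ i, 0 < x i) (hk : k < n) : 0 < sumTail x k :=
  sum_pos (fun i _ ↦ hx i) ⟨⟨k, hk⟩, by simp⟩

theorem pos_of_sumTail_pos (hx : Antitone x) {i : Fin n} (h : 0 < sumTail x i) : 0 < x i := by
  by_contra! hi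
  exact h.not_ge (sum_nonpos fun j hj ↦ (hx ((mem_filter_univ j).mp hj)).trans hi)

theorem pos_of_prodHead_le_mul_sumTail (hx : Antitone x) (hc : 0 ≤ c)
    (h : ∀ k < n, prodHead x k ≤ c * sumTail x k) (i : Fin n) : 0 < x i := by
  induction i using WellFoundedLT.induction with
  | ind i ih =>
    have hhead : 0 < prodHead x i := prod_pos fun j hj ↦ ih j ((mem_filter_univ j).mp hj)
    have htail : 0 < c * sumTail x i := hhead.trans_le (h i i.isLt)
    exact pos_of_sumTail_pos hx (pos_of_mul_pos_right htail hc)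

theorem prodHead_succ_lt_mul_sumTail_succ (hn : 3 ≤ n) (hc : 1 ≤ c) (hpos : ∀ i, 0 < x i)
    (hlt : ∀ i, x i < 1) (hk : k + 1 < n) (hle : x ⟨k, by omega⟩ ≤ x ⟨k + 1, hk⟩) :
    prodHead x (k + 1) < c * sumTail x (k + 1) := by
  suffices prodHead x (k + 1) < sumTail x (k + 1) from
    this.trans_le (le_mul_of_one_le_left (sumTail_pos hpos hk).le hc)
  rw [prodHead_succ x (by omega), sumTail_eq_add_sumTail_succ x hk]
  obtain rfl | hk0 := k.eq_zero_or_pos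
  · rw [prodHead_zero, one_mul]
    exact hle.trans_lt (lt_add_of_pos_right _ (sumTail_pos hpos hn))
  · calc prodHead x k * x ⟨k, _⟩
        < x ⟨k, _⟩ :=
          mul_lt_of_lt_one_left (hpos _) (prodHead_lt_one hpos hlt hk0 (by omega))
      _ ≤ x ⟨k + 1, hk⟩ := hle
      _ ≤ x ⟨k + 1, hk⟩ + sumTail x (k + 1 + 1) :=
          le_add_of_nonneg_right (sumTail_nonneg (fun i ↦ (hpos i).le) _)

theorem prodHead_mul_one_sub_eq (hk : k < n) (h : prodHead x k = c * sumTail x k)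
    (hsucc : prodHead x (k + 1) = c * sumTail x (k + 1)) :
    prodHead x k * (1 - x ⟨k, hk⟩) = c * x ⟨k, hk⟩ := by
  rw [sumTail_eq_add_sumTail_succ x hk] at h
  rw [prodHead_succ x hk] at hsucc
  linear_combination h - hsucc

end HeadTail

section Equality

variable {g n k : ℕ} {x : Fin n → ℝ}

theorem mul_sylv_succ_eq_one (hg : g ≠ 0) (hk : k < n)
    (hP : prodHead x k * tsylv g (k + 1) = g) (h : prodHead x k = g * sumTail x k)
    (hsucc : prodHead x (k + 1) = g * sumTail x (k + 1)) :
    x ⟨k, hk⟩ * sylv g (k + 1) = 1 := by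
  have hP0 : prodHead x k ≠ 0 := left_ne_zero_of_mul (hP ▸ Nat.cast_ne_zero.mpr hg)
  apply mul_left_cancel₀ hP0
  rw [sylv_succ_eq_tsylv_add_one]
  push_cast
  linear_combination x ⟨k, hk⟩ * hP - prodHead_mul_one_sub_eq hk h hsucc

theorem prodHead_mul_tsylv_succ (hg : g ≠ 0) (hk : k ≤ n)
    (h : ∀ i ≤ k, prodHead x i = g * sumTail x i) :
    prodHead x k * tsylv g (k + 1) = g := by
  induction k with
  | zero => rw [prodHead_zero, tsylv_one, one_mul]
  | succ k ih =>
    have hP := ih (by omega) fun i hi ↦ h i (by omega)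
    have hx := mul_sylv_succ_eq_one hg hk hP (h k (by omega)) (h (k + 1) le_rfl)
    rw [prodHead_succ x hk, tsylv_succ_succ]
    push_cast
    linear_combination prodHead x k * tsylv g (k + 1) * hx + hP

theorem eq_one_div_sylv_succ (hg : g ≠ 0) (hk : k < n)
    (h : ∀ i ≤ k + 1, prodHead x i = g * sumTail x i) :
    x ⟨k, hk⟩ = 1 / sylv g (k + 1) := by
  have hP := prodHead_mul_tsylv_succ hg hk.le fun i hi ↦ h i (by omega)
  exact eq_one_div_of_mul_eq_one_left
    (mul_sylv_succ_eq_one hg hk hP (h k (by omega)) (h (k + 1) le_rfl))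

end Equality

section Agn

variable {g n : ℕ} {x : Fin n → ℝ}

theorem prodHead_zero_eq_mul_sumTail_zero (hg : g ≠ 0) (hx : x ∈ Agn g n) :
    prodHead x 0 = g * sumTail x 0 := by
  rw [prodHead_zero, sumTail_zero, hx.2.2.1, mul_one_div_cancel (Nat.cast_ne_zero.mpr hg)]

theorem pos_of_mem_Agn (hg : g ≠ 0) (hx : x ∈ Agn g n) (i : Fin n) : 0 < x i := by
  refine pos_of_prodHead_le_mul_sumTail hx.1 g.cast_nonneg (fun k hk ↦ ?_) i
  obtain rfl | hk0 := k.eq_zero_or_pos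
  · exact (prodHead_zero_eq_mul_sumTail_zero hg hx).le
  · exact hx.2.2.2 k hk0 (by omega)

theorem lt_one_div_of_mem_Agn (hg : g ≠ 0) (hn : 2 ≤ n) (hx : x ∈ Agn g n) (i : Fin n) :
    x i < 1 / g := by
  have : Nontrivial (Fin n) := Fin.nontrivial_iff_two_le.mpr hn
  obtain ⟨j, hji⟩ := exists_ne i
  rw [← hx.2.2.1]
  exact single_lt_sum hji (mem_univ i) (mem_univ j) (pos_of_mem_Agn hg hx j) fun l _ _ ↦ hx.2.1 l

end Agn

/-- Structure of the set `A_g^n` for `g ≥ 1`, `n ≥ 3`: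
(i) `1/g > x₁ ≥ xₙ > 0`; (ii) `ORD(k)` and `PS(g,k)` cannot both hold with
equality; (iii) if `PS(g,i)` holds with equality for all `i ≤ k`, then
`xᵢ = 1/s_{g,i}` for `i = 1,…,k`. -/
theorem Agn_structure
    (g n : ℕ) (hg : 1 ≤ g) (hn : 3 ≤ n)
    (x : Fin n → ℝ) (hx : x ∈ Agn g n) :
    (x ⟨0, by omega⟩ < 1 / (g : ℝ) ∧
      x ⟨n - 1, by omega⟩ ≤ x ⟨0, by omega⟩ ∧
      0 < x ⟨n - 1, by omega⟩) ∧
    (∀ k, ∀ hk1 : 1 ≤ k, ∀ hk2 : k ≤ n - 1,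
      ¬(x ⟨k - 1, by omega⟩ = x ⟨k, by omega⟩ ∧
        prodHead x k = (g : ℝ) * sumTail x k)) ∧
    (∀ k, ∀ hk1 : 1 ≤ k, ∀ hk2 : k ≤ n - 1,
      (∀ i, 1 ≤ i → i ≤ k → prodHead x i = (g : ℝ) * sumTail x i) →
      ∀ i, ∀ hi1 : 1 ≤ i, ∀ hi2 : i ≤ k,
        x ⟨i - 1, by omega⟩ = 1 / (sylv g i : ℝ)) := by
  have hg0 : g ≠ 0 := by omega
  have hg1 : (1 : ℝ) ≤ g := Nat.one_le_cast.mpr hg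
  have hpos := pos_of_mem_Agn hg0 hx
  have hlt := lt_one_div_of_mem_Agn hg0 (by omega) hx
  refine ⟨⟨hlt _, hx.1 (Nat.zero_le _), hpos _⟩, ?_, ?_⟩
  · rintro k hk1 hk2 ⟨hcoord, hprod⟩
    obtain ⟨m, rfl⟩ := Nat.exists_eq_add_of_le' hk1
    have hlt_one : ∀ i, x i < 1 := fun i ↦ (hlt i).trans_le (div_le_one_of_le₀ hg1 (by positivity))
    exact (prodHead_succ_lt_mul_sumTail_succ hn hg1 hpos hlt_one (by omega) hcoord.le).ne hprod
  · intro k _ hk2 heq i hi1 hi2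
    obtain ⟨m, rfl⟩ := Nat.exists_eq_add_of_le' hi1
    refine eq_one_div_sylv_succ hg0 (by omega) fun j hj ↦ ?_
    obtain rfl | hj0 := j.eq_zero_or_pos
    · exact prodHead_zero_eq_mul_sumTail_zero hg0 hx
    · exact heq j hj0 (hj.trans hi2)
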